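/- arXiv:2307.00966 — 6 statements merged into one kernel-verified Lean document; each statement's English description precedes it below -/
import Mathlib

section
/- For every integer n ≥ 2, the matrix M(n) is non-singular, i.e., its determinant (over ℚ) is nonzero. Consequently, for every target vector b ∈ ℚ^{9|Pₙ|} the linear system M(n)·t = b has a (unique) solution t. -/
/-!
The matrix `M(n)` has integer entries, and its determinant is already nonzero modulo `3`.

Let `t` be in the kernel of `M(n)` over `ZMod 3`, and write `t_c(α, β)` for its entries in the
block `c`. A block `c ≠ p` misses a qubit of the coupling `p`, and has a qubit outside `p`, over
whose gate label the sum `Σ 1 = 3 = 0` is free. Hence only the block `p` survives in suitable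
differences of the rows belonging to `p`, and the argument is local to one block:

* the mixed second difference in `(μ, ν)` of the rows of `p` only sees the block `p`, where it is
  `4` times the mixed second difference of `t_p`; hence `t_p(α, β) = a(α) + b(β)`
  (`kernel_split`);
* given this for all blocks, the first difference in `μ` (or in `ν`) again only sees the block
  `p`, where it is `-2` times the difference of `a` (or of `b`); hence `t_p` is constant
  (`kernel_const`);
* given this for all blocks, the row itself only sees the block `p`, where it equals the constant
  value of `t_p`; hence `t = 0` (`kernel_zero`).
-/

open Matrix

/-- Sign factor ε(a,b) = 1 if a = b, −1 otherwise, for Pauli labels in {x,y,z} ≅ Fin 3. -/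
def eps (a b : Fin 3) : ℚ := if a = b then 1 else -1

/-- The set Pₙ of ordered pairs (i,j) with i < j, indexing couplings/blocks. -/
abbrev PairIdx (n : ℕ) := {p : Fin n × Fin n // p.1 < p.2}

/-- The sign s(q,ρ) contributed to the coupling term on qubit q with Pauli ρ when
gates (α,β) are applied on the qubit pair (k,l). -/
def sgn {n : ℕ} (k l : Fin n) (α β : Fin 3) (q : Fin n) (ρ : Fin 3) : ℚ :=
  if q = k then eps ρ α else if q = l then eps ρ β else 1

/-- The matrix M(n): rows indexed by (coupling (i,j), Pauli pair (μ,ν)), columns by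
(block (k,l), gate pair (α,β)); the entry is s(i,μ)·s(j,ν). -/
def Mmat (n : ℕ) : Matrix (PairIdx n × Fin 3 × Fin 3) (PairIdx n × Fin 3 × Fin 3) ℚ :=
  fun r c =>
    sgn c.1.1.1 c.1.1.2 c.2.1 c.2.2 r.1.1.1 r.2.1 *
    sgn c.1.1.1 c.1.1.2 c.2.1 c.2.2 r.1.1.2 r.2.2

namespace PauliMod3

/-- The sign `ε(a, b)` with values in an arbitrary commutative ring. -/
def epsR (R : Type*) [CommRing R] (a b : Fin 3) : R := if a = b then 1 else -1

/-- The sign `s(q, ρ)` with values in an arbitrary commutative ring. -/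
def sgnR (R : Type*) [CommRing R] {n : ℕ} (k l : Fin n) (α β : Fin 3) (q : Fin n) (ρ : Fin 3) :
    R :=
  if q = k then epsR R ρ α else if q = l then epsR R ρ β else 1

/-- The matrix `M(n)` with entries in an arbitrary commutative ring. -/
def MR (R : Type*) [CommRing R] (n : ℕ) :
    Matrix (PairIdx n × Fin 3 × Fin 3) (PairIdx n × Fin 3 × Fin 3) R :=
  fun r c =>
    sgnR R c.1.1.1 c.1.1.2 c.2.1 c.2.2 r.1.1.1 r.2.1 *
    sgnR R c.1.1.1 c.1.1.2 c.2.1 c.2.2 r.1.1.2 r.2.2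

lemma map_epsR {R S : Type*} [CommRing R] [CommRing S] (f : R →+* S) (a b : Fin 3) :
    f (epsR R a b) = epsR S a b := by
  unfold epsR; split_ifs <;> simp

lemma map_MR {R S : Type*} [CommRing R] [CommRing S] (f : R →+* S) (n : ℕ) :
    (MR R n).map f = MR S n := by
  ext r c
  simp only [Matrix.map_apply, MR, sgnR, map_mul, apply_ite f, map_epsR, map_one]

lemma Mmat_eq (n : ℕ) : Mmat n = MR ℚ n := rfl

/-- The contribution of the block `c`, with block vector `x`, to the row `(p, μ, ν)` of
`M(n) t`. -/
def contrib {n : ℕ} (p c : PairIdx n) (x : Fin 3 → Fin 3 → ZMod 3) (μ ν : Fin 3) : ZMod 3 :=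
  ∑ α, ∑ β, sgnR (ZMod 3) c.1.1 c.1.2 α β p.1.1 μ * sgnR (ZMod 3) c.1.1 c.1.2 α β p.1.2 ν * x α β

lemma three_eq_zero : (3 : ZMod 3) = 0 := by decide

variable {n : ℕ}

lemma contrib_self (p : PairIdx n) (x : Fin 3 → Fin 3 → ZMod 3) (μ ν : Fin 3) :
    contrib p p x μ ν = ∑ α, ∑ β, epsR (ZMod 3) μ α * epsR (ZMod 3) ν β * x α β := by
  have h : p.1.2 ≠ p.1.1 := p.2.ne'
  simp [contrib, sgnR, h]

/-- A block different from the coupling misses one of the qubits of the coupling, so its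
contribution is constant in one of `μ`, `ν`. The explicit forms are recorded according to which
qubit is shared. -/
lemma contrib_of_ne {p c : PairIdx n} (h : c ≠ p) (x : Fin 3 → Fin 3 → ZMod 3) :
    (∀ μ ν, contrib p c x μ ν = ∑ α, ∑ β, x α β) ∨
    (∀ μ ν, contrib p c x μ ν = ∑ α, ∑ β, epsR (ZMod 3) μ α * x α β) ∨
    (∀ μ ν, contrib p c x μ ν = ∑ α, ∑ β, epsR (ZMod 3) μ β * x α β) ∨
    (∀ μ ν, contrib p c x μ ν = ∑ α, ∑ β, epsR (ZMod 3) ν α * x α β) ∨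
    (∀ μ ν, contrib p c x μ ν = ∑ α, ∑ β, epsR (ZMod 3) ν β * x α β) := by
  obtain ⟨⟨i, j⟩, hij⟩ := p
  obtain ⟨⟨k, l⟩, hkl⟩ := c
  simp only at hij hkl
  simp only [ne_eq, Subtype.mk.injEq, Prod.mk.injEq, not_and] at h
  simp only [contrib, sgnR]
  by_cases hik : i = k
  · subst hik
    have h1 : j ≠ i := hij.ne'
    have h2 : j ≠ l := fun e => h rfl e.symm
    right; left; simp [h1, h2]
  by_cases hil : i = l
  · subst hil
    have h1 : j ≠ i := hij.ne'
    have h2 : j ≠ k := (hkl.trans hij).ne'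
    right; right; left; simp [h1, h2, hik]
  by_cases hjk : j = k
  · right; right; right; left; simp [hik, hil, hjk]
  by_cases hjl : j = l
  · subst hjl
    right; right; right; right; simp [hik, hil, hjk]
  · left; simp [hik, hil, hjk, hjl]

lemma mixed_diff (x : Fin 3 → Fin 3 → ZMod 3) (g : Fin 3 → Fin 3 → ZMod 3)
    (hg : ∀ μ ν, g μ ν = ∑ α, ∑ β, epsR (ZMod 3) μ α * epsR (ZMod 3) ν β * x α β) (μ ν : Fin 3) :
    g μ ν - g 0 ν - g μ 0 + g 0 0 = 4 * (x μ ν - x 0 ν - x μ 0 + x 0 0) := by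
  simp only [hg]
  fin_cases μ <;> fin_cases ν <;> simp [Fin.sum_univ_three, epsR] <;> ring

section Kernel

variable {T : PairIdx n → Fin 3 → Fin 3 → ZMod 3}

lemma kernel_split (hT : ∀ p μ ν, ∑ c, contrib p c (T c) μ ν = 0) (p : PairIdx n) (μ ν : Fin 3) :
    T p μ ν = T p μ 0 + (T p 0 ν - T p 0 0) := by
  have h : ∑ c, (contrib p c (T c) μ ν - contrib p c (T c) 0 ν - contrib p c (T c) μ 0
      + contrib p c (T c) 0 0) = 0 := by
    simp only [Finset.sum_add_distrib, Finset.sum_sub_distrib, hT]; ring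
  rw [Fintype.sum_eq_single p, mixed_diff _ _ (contrib_self p (T p))] at h
  · have h3 := three_eq_zero
    linear_combination h - (T p μ ν - T p 0 ν - T p μ 0 + T p 0 0) * h3
  · intro c hc
    rcases contrib_of_ne hc (T c) with h | h | h | h | h <;> simp only [h] <;> ring

lemma kernel_const (hT : ∀ p μ ν, ∑ c, contrib p c (T c) μ ν = 0) (p : PairIdx n) (μ ν : Fin 3) :
    T p μ ν = T p 0 0 := by
  have h3 := three_eq_zero
  have split : ∀ c, ∃ a b : Fin 3 → ZMod 3, T c = fun α β => a α + b β := fun c =>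
    ⟨fun α => T c α 0, fun β => T c 0 β - T c 0 0, by ext α β; exact kernel_split hT c α β⟩
  -- On a block sharing one qubit with `p`, the sign difference annihilates one summand of
  -- `a + b` and the free sum contributes a factor `3` to the other.
  have eA : ∀ (a b : Fin 3 → ZMod 3) (ρ : Fin 3),
      ∑ α, ∑ β, epsR (ZMod 3) ρ α * (a α + b β) - ∑ α, ∑ β, epsR (ZMod 3) 0 α * (a α + b β)
        = 0 := by
    intro a b ρ
    trans 3 * (2 * (a ρ - a 0))
    · fin_cases ρ <;> simp [Fin.sum_univ_three, epsR] <;> ring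
    · rw [h3, zero_mul]
  have eB : ∀ (a b : Fin 3 → ZMod 3) (ρ : Fin 3),
      ∑ α, ∑ β, epsR (ZMod 3) ρ β * (a α + b β) - ∑ α, ∑ β, epsR (ZMod 3) 0 β * (a α + b β)
        = 0 := by
    intro a b ρ
    trans 3 * (2 * (b ρ - b 0))
    · fin_cases ρ <;> simp [Fin.sum_univ_three, epsR] <;> ring
    · rw [h3, zero_mul]
  have hμ : ∑ c, (contrib p c (T c) μ 0 - contrib p c (T c) 0 0) = 0 := by
    simp only [Finset.sum_sub_distrib, hT]; ring
  have hν : ∑ c, (contrib p c (T c) 0 ν - contrib p c (T c) 0 0) = 0 := by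
    simp only [Finset.sum_sub_distrib, hT]; ring
  rw [Fintype.sum_eq_single p] at hμ hν
  · obtain ⟨a, b, hab⟩ := split p
    rw [contrib_self, contrib_self, hab] at hμ hν
    have e1 : -2 * (a μ - a 0) = 0 := by
      rw [← hμ]
      fin_cases μ <;> simp [Fin.sum_univ_three, epsR] <;> ring
    have e2 : -2 * (b ν - b 0) = 0 := by
      rw [← hν]
      fin_cases ν <;> simp [Fin.sum_univ_three, epsR] <;> ring
    rw [hab]
    linear_combination e1 + e2 + (a μ - a 0 + b ν - b 0) * h3
  all_goals
    intro c hc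
    obtain ⟨a, b, hab⟩ := split c
    rcases contrib_of_ne hc (T c) with h | h | h | h | h <;> simp only [h] <;>
      simp only [hab, sub_self, eA, eB]

lemma kernel_zero (hT : ∀ p μ ν, ∑ c, contrib p c (T c) μ ν = 0) (p : PairIdx n) (μ ν : Fin 3) :
    T p μ ν = 0 := by
  have h3 := three_eq_zero
  have hc : ∀ c, T c = fun _ _ => T c 0 0 := fun c => by
    ext α β; exact kernel_const hT c α β
  have h := hT p 0 0
  rw [Fintype.sum_eq_single p] at h
  · rw [contrib_self, hc p] at h
    rw [kernel_const hT, ← h]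
    simp [Fin.sum_univ_three, epsR]
  · intro c hcp
    rcases contrib_of_ne hcp (T c) with h | h | h | h | h <;> rw [h, hc c] <;>
      simp [Fin.sum_univ_three, epsR, h3]

end Kernel

lemma det_MR_mod_three (n : ℕ) : (MR (ZMod 3) n).det ≠ 0 := by
  intro h0
  obtain ⟨t, ht, hMt⟩ := Matrix.exists_mulVec_eq_zero_iff.mpr h0
  refine ht (funext fun ⟨p, μ, ν⟩ => ?_)
  refine kernel_zero (T := fun c α β => t (c, α, β)) (fun p μ ν => ?_) p μ ν
  have h := congrFun hMt (p, μ, ν)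
  simpa only [Matrix.mulVec, dotProduct, Fintype.sum_prod_type, MR, contrib, Pi.zero_apply] using h

end PauliMod3

/-- For every n ≥ 2 the matrix M(n) is non-singular over ℚ, and consequently
every linear system M(n)·t = b has a unique solution. -/
theorem Mmat_det_ne_zero_and_unique_solution (n : ℕ) (hn : 2 ≤ n) :
    (Mmat n).det ≠ 0 ∧
      ∀ b : PairIdx n × Fin 3 × Fin 3 → ℚ,
        ∃! t : PairIdx n × Fin 3 × Fin 3 → ℚ, (Mmat n) *ᵥ t = b := by
  have hdet : (Mmat n).det ≠ 0 := by
    intro h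
    apply PauliMod3.det_MR_mod_three n
    rw [PauliMod3.Mmat_eq, ← PauliMod3.map_MR (Int.castRingHom ℚ), ← RingHom.mapMatrix_apply,
      ← RingHom.map_det] at h
    have hZ : (PauliMod3.MR ℤ n).det = 0 := by simpa using h
    rw [← PauliMod3.map_MR (Int.castRingHom (ZMod 3)), ← RingHom.mapMatrix_apply,
      ← RingHom.map_det, hZ, map_zero]
  have hu : IsUnit (Mmat n) := (Matrix.isUnit_iff_isUnit_det _).mpr hdet.isUnit
  exact ⟨hdet, fun b => Function.Bijective.existsUnique
    ⟨Matrix.mulVec_injective_iff_isUnit.mpr hu, Matrix.mulVec_surjective_iff_isUnit.mpr hu⟩ b⟩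
end

section
/- For every integer n ≥ 2 and every vector b ∈ ℝ^{9|Pₙ|}, there exist nonnegative real numbers t_g ≥ 0, indexed by the 4ⁿ gate assignments g : {1,…,n} → {𝟙,x,y,z}, such that Σ_g t_g · M_g = b. In other words, the family of sign vectors {M_g} positively spans ℝ^{9|Pₙ|}. -/
/-!
Identify the gate labels with the group `(ℤ/2)²`, `none` being the identity. Then
`epsTilde · μ`, for `μ ∈ {x, y, z}`, are the three nontrivial characters of this group, so the
coordinate functions `g ↦ Mvec g idx` are characters of `((ℤ/2)²)ⁿ`; they are nontrivial and
pairwise distinct (`pairLabel_ne_none`, `pairLabel_injective`). By orthogonality of characters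
(`sum_chi_mul_chi`), the coefficients `4⁻ⁿ ∑ idx, b idx * Mvec g idx` represent `b`. Adding the
constant `4⁻ⁿ ∑ idx, |b idx|` makes them nonnegative, and does not change the combination since
each coordinate function sums to zero over all `g`.
-/

/-- Gate labels: `none` is the identity 𝟙, `some b` is the Pauli gate b ∈ {x,y,z} ≅ Fin 3.
ε̃(g,b) = 1 if g = 𝟙 or g = b, and −1 otherwise. -/
def epsTilde (g : Option (Fin 3)) (b : Fin 3) : ℝ :=
  if g = none ∨ g = some b then 1 else -1

/-- The sign vector M_g ∈ {±1}^{9|Pₙ|} of a gate assignment g : {1,…,n} → {𝟙,x,y,z},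
with component ε̃(g(i),μ)·ε̃(g(j),ν) at index ((i,j),(μ,ν)). -/
def Mvec {n : ℕ} (g : Fin n → Option (Fin 3)) : PairIdx n × Fin 3 × Fin 3 → ℝ :=
  fun idx => epsTilde (g idx.1.1.1) idx.2.1 * epsTilde (g idx.1.1.2) idx.2.2

/-- The four characters of the group of gate labels; `none` indexes the trivial one. -/
def labelChar (g : Option (Fin 3)) : Option (Fin 3) → ℝ
  | none => 1
  | some b => epsTilde g b

/-- The character of the group of gate assignments with component `a i` at site `i`. -/
def chi {n : ℕ} (a g : Fin n → Option (Fin 3)) : ℝ :=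
  ∏ i, labelChar (g i) (a i)

lemma sum_labelChar (a c : Option (Fin 3)) :
    ∑ g, labelChar g a * labelChar g c = if a = c then 4 else 0 := by
  rcases a with _ | a <;> rcases c with _ | c
  · simp [labelChar]
  · fin_cases c <;> simp [labelChar, epsTilde, Fintype.sum_option, Fin.sum_univ_three]
  · fin_cases a <;> simp [labelChar, epsTilde, Fintype.sum_option, Fin.sum_univ_three]
  · fin_cases a <;> fin_cases c <;>
      simp [labelChar, epsTilde, Fintype.sum_option, Fin.sum_univ_three] <;> norm_num

/-- Orthogonality of the characters, by factorising the sum over the sites. -/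
lemma sum_chi_mul_chi {n : ℕ} (a c : Fin n → Option (Fin 3)) :
    ∑ g, chi a g * chi c g = if a = c then (4 : ℝ) ^ n else 0 := by
  have h : ∑ g, chi a g * chi c g
      = ∏ i, ∑ x, labelChar x (a i) * labelChar x (c i) := by
    rw [Finset.prod_univ_sum, Fintype.piFinset_univ]
    simp only [chi, Finset.prod_mul_distrib]
  rw [h]
  simp only [sum_labelChar]
  split_ifs with hac
  · simp [hac]
  · obtain ⟨i, hi⟩ := Function.ne_iff.mp hac
    exact Finset.prod_eq_zero (Finset.mem_univ i) (if_neg hi)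

/-- The index of the character `g ↦ Mvec g ((i, j), (μ, ν))`: it is `μ` at `i`, `ν` at `j`, and
trivial elsewhere. -/
def pairLabel {n : ℕ} (p : PairIdx n × Fin 3 × Fin 3) : Fin n → Option (Fin 3) :=
  fun k => if k = p.1.1.1 then some p.2.1 else if k = p.1.1.2 then some p.2.2 else none

lemma Mvec_eq_chi {n : ℕ} (g : Fin n → Option (Fin 3)) (p : PairIdx n × Fin 3 × Fin 3) :
    Mvec g p = chi (pairLabel p) g := by
  obtain ⟨⟨⟨i, j⟩, hij⟩, μ, ν⟩ := p
  have hne : i ≠ j := ne_of_lt hij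
  unfold chi
  rw [Fintype.prod_eq_mul i j hne]
  · simp [Mvec, pairLabel, labelChar, hne.symm]
  · rintro k ⟨hi, hj⟩
    simp [pairLabel, hi, hj, labelChar]

lemma pairLabel_ne_none {n : ℕ} (p : PairIdx n × Fin 3 × Fin 3) :
    pairLabel p ≠ fun _ => none := by
  intro h
  simpa [pairLabel] using congrFun h p.1.1.1

/-- The sites carrying a nontrivial label recover `{i, j}`, and `i < j` fixes their order. -/
lemma pairLabel_injective {n : ℕ} :
    Function.Injective (pairLabel : PairIdx n × Fin 3 × Fin 3 → _) := by
  rintro ⟨⟨⟨i, j⟩, hij⟩, μ, ν⟩ ⟨⟨⟨i', j'⟩, hij'⟩, μ', ν'⟩ h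
  have h1 := congrFun h i
  have h2 := congrFun h j
  have h3 := congrFun h i'
  have h4 := congrFun h j'
  simp only [pairLabel] at h1 h2 h3 h4 hij hij'
  simp only [Prod.mk.injEq, Subtype.mk.injEq]
  grind

/-- For every n ≥ 2 and every b ∈ ℝ^{9|Pₙ|} there are nonnegative coefficients t_g,
indexed by all 4ⁿ gate assignments, with Σ_g t_g · M_g = b: the sign vectors M_g
positively span ℝ^{9|Pₙ|}. -/
theorem exists_nonneg_combination (n : ℕ) (hn : 2 ≤ n)
    (b : PairIdx n × Fin 3 × Fin 3 → ℝ) :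
    ∃ t : (Fin n → Option (Fin 3)) → ℝ,
      (∀ g, 0 ≤ t g) ∧ ∑ g : Fin n → Option (Fin 3), t g • Mvec g = b := by
  have hzero (q : PairIdx n × Fin 3 × Fin 3) : ∑ g, Mvec g q = 0 := by
    have h := sum_chi_mul_chi (pairLabel q) (fun _ => none)
    rw [if_neg (pairLabel_ne_none q)] at h
    simpa [Mvec_eq_chi, chi, labelChar] using h
  have horth (p q : PairIdx n × Fin 3 × Fin 3) :
      ∑ g, Mvec g p * Mvec g q = if p = q then (4 : ℝ) ^ n else 0 := by
    simp only [Mvec_eq_chi, sum_chi_mul_chi, pairLabel_injective.eq_iff]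
  have habs (g : Fin n → Option (Fin 3)) (p : PairIdx n × Fin 3 × Fin 3) :
      |Mvec g p| = 1 := by
    have h (x : Option (Fin 3)) (c : Fin 3) : |epsTilde x c| = 1 := by
      unfold epsTilde
      split_ifs <;> simp
    simp [Mvec, abs_mul, h]
  refine ⟨fun g => ((4 : ℝ) ^ n)⁻¹ * (∑ p, b p * Mvec g p + ∑ p, |b p|), fun g => ?_, ?_⟩
  · refine mul_nonneg (by positivity) ?_
    rw [← Finset.sum_add_distrib]
    refine Finset.sum_nonneg fun p _ => ?_
    have h := neg_abs_le (b p * Mvec g p)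
    rw [abs_mul, habs, mul_one] at h
    linarith
  · funext q
    have hmain : ∑ g, (∑ p, b p * Mvec g p) * Mvec g q = b q * 4 ^ n := by
      simp only [Finset.sum_mul, mul_assoc]
      rw [Finset.sum_comm]
      simp [← Finset.mul_sum, horth]
    simp only [Finset.sum_apply, Pi.smul_apply, smul_eq_mul, mul_assoc, add_mul,
      ← Finset.mul_sum, Finset.sum_add_distrib]
    rw [hmain, hzero]
    field_simp
    simp
end

section
/- For every integer n ≥ 2 and any two distinct gate assignments g ≠ g' from {1,…,n} to {𝟙,x,y,z}, the vectors M_g and M_{g'} are not parallel: M_g ≠ λ·M_{g'} for every real λ (in particular M_g ≠ ±M_{g'}). -/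
lemma epsTilde_mul_self (a : Option (Fin 3)) (b : Fin 3) : epsTilde a b * epsTilde a b = 1 := by
  unfold epsTilde
  split_ifs <;> norm_num

lemma eq_of_epsTilde_proportional (a b : Option (Fin 3)) (c : ℝ)
    (h : ∀ μ, epsTilde a μ = c * epsTilde b μ) : a = b := by
  have h0 := h 0
  have h1 := h 1
  have h2 := h 2
  rcases a with _ | a <;> rcases b with _ | b <;> (try fin_cases a) <;> (try fin_cases b) <;>
    simp [epsTilde] at h0 h1 h2 ⊢ <;> linarith

/-- For n ≥ 2 and distinct gate assignments g ≠ g', the sign vectors M_g and M_{g'}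
are not parallel: M_g ≠ λ · M_{g'} for every real λ. -/
theorem Mvec_not_parallel (n : ℕ) (hn : 2 ≤ n)
    (g g' : Fin n → Option (Fin 3)) (hgg' : g ≠ g') (lam : ℝ) :
    Mvec g ≠ lam • Mvec g' := by
  intro h
  apply hgg'
  funext i
  have : Nontrivial (Fin n) := Fin.nontrivial_iff_two_le.mpr hn
  obtain ⟨j, hj⟩ := exists_ne i
  -- The factor at `j` squares to one, so it moves to the other side as part of the constant.
  apply eq_of_epsTilde_proportional _ _ (lam * epsTilde (g' j) 0 * epsTilde (g j) 0)
  intro μ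
  have hs := epsTilde_mul_self (g j) 0
  rcases lt_or_gt_of_ne hj with hlt | hlt
  · have e := congrFun h (⟨(j, i), hlt⟩, 0, μ)
    simp only [Mvec, Pi.smul_apply, smul_eq_mul] at e
    linear_combination epsTilde (g j) 0 * e - epsTilde (g i) μ * hs
  · have e := congrFun h (⟨(i, j), hlt⟩, μ, 0)
    simp only [Mvec, Pi.smul_apply, smul_eq_mul] at e
    linear_combination epsTilde (g j) 0 * e - epsTilde (g i) μ * hs
end

section
/- Let R be a commutative ring and p, q, r ∈ R. Let D be the 9×9 matrix over R whose rows and columns are indexed by ordered pairs (α,β) ∈ {1,2,3}², with entry at position ((α,β),(γ,δ)) equal to p if α = γ and β = δ, equal to q if exactly one of α = γ, β = δ holds, and equal to r if α ≠ γ and β ≠ δ. Then det D = (p + q − 2r)⁴ · (p − 2q + r)⁴ · (p + 4q + 4r). -/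
open Matrix

/-!
Let `A` be the `3 × 3` matrix with zero diagonal and ones elsewhere. The pattern matrix is
`p (1 ⊗ 1) + q (1 ⊗ A + A ⊗ 1) + r (A ⊗ A)`. Since `A` maps `(1,1,1)` to twice itself and acts as
`-1` modulo that vector, `A * P = P * T` with `P` of determinant one and `T` upper triangular with
diagonal `2, -1, -1`, over any commutative ring. Hence conjugation by `P ⊗ P` replaces `A` by `T`
in the Kronecker expression, which makes it upper triangular in the lexicographic order, and the
determinant is the product of `p + q (s + t) + r s t` over `s, t ∈ {2, -1, -1}`.
-/

namespace PatternMatrix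

open scoped Kronecker

variable {R : Type*} [CommRing R]

/-- The Kronecker expression
`p (1 ⊗ 1) + q (1 ⊗ M + M ⊗ 1) + r (M ⊗ M)`. -/
def kron (p q r : R) (M : Matrix (Fin 3) (Fin 3) R) : Matrix (Fin 3 × Fin 3) (Fin 3 × Fin 3) R :=
  p • (1 ⊗ₖ 1) + q • (1 ⊗ₖ M + M ⊗ₖ 1) + r • (M ⊗ₖ M)

/-- The matrix with zero diagonal and all other entries one. -/
def offDiag (R : Type*) [CommRing R] : Matrix (Fin 3) (Fin 3) R :=
  !![0, 1, 1; 1, 0, 1; 1, 1, 0]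

/-- The upper triangular form of `offDiag`. -/
def tri (R : Type*) [CommRing R] : Matrix (Fin 3) (Fin 3) R :=
  !![2, 1, 1; 0, -1, 0; 0, 0, -1]

/-- The change of basis: its columns are `(1,1,1)` and the last two standard basis vectors. -/
def basisChange (R : Type*) [CommRing R] : Matrix (Fin 3) (Fin 3) R :=
  !![1, 0, 0; 1, 1, 0; 1, 0, 1]

lemma det_basisChange : (basisChange R).det = 1 := by
  simp [basisChange, det_fin_three]

lemma offDiag_mul_basisChange : offDiag R * basisChange R = basisChange R * tri R := by
  ext i j
  fin_cases i <;> fin_cases j <;>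
    simp [offDiag, basisChange, tri, mul_apply, Fin.sum_univ_three, one_add_one_eq_two]

lemma kron_mul (p q r : R) {A P T : Matrix (Fin 3) (Fin 3) R} (h : A * P = P * T) :
    kron p q r A * (P ⊗ₖ P) = (P ⊗ₖ P) * kron p q r T := by
  simp only [kron, add_mul, mul_add, smul_mul_assoc, mul_smul_comm, ← mul_kronecker_mul,
    h, one_mul, mul_one, smul_add]

lemma tri_eq_zero {i j : Fin 3} (h : j < i) : tri R i j = 0 := by
  fin_cases i <;> fin_cases j <;> simp_all [tri]

lemma det_kron_tri (p q r : R) :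
    (kron p q r (tri R)).det
      = (p + q - 2 * r) ^ 4 * (p - 2 * q + r) ^ 4 * (p + 4 * q + 4 * r) := by
  rw [← det_reindex_self (toLex : Fin 3 × Fin 3 ≃ Fin 3 ×ₗ Fin 3), det_of_isUpperTriangular]
  · rw [← (toLex : Fin 3 × Fin 3 ≃ Fin 3 ×ₗ Fin 3).prod_comp, Fintype.prod_prod_type]
    simp [kron, tri, Fin.prod_univ_three]
    ring
  · intro a b hab
    obtain ⟨⟨i, j⟩, rfl⟩ := toLex.surjective a
    obtain ⟨⟨k, l⟩, rfl⟩ := toLex.surjective b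
    rcases Prod.Lex.toLex_lt_toLex.1 hab with h | ⟨h, h'⟩
    · simp only at h
      simp [kron, tri_eq_zero h, one_apply, h.ne']
    · simp only at h h'
      simp [kron, tri_eq_zero h', one_apply, h'.ne']

lemma kron_offDiag (p q r : R) :
    Matrix.of (fun (a b : Fin 3 × Fin 3) =>
        if a.1 = b.1 ∧ a.2 = b.2 then p
        else if a.1 = b.1 ∨ a.2 = b.2 then q
        else r) = kron p q r (offDiag R) := by
  have hA : ∀ i j, offDiag R i j = if i = j then 0 else 1 := by
    intro i j
    fin_cases i <;> fin_cases j <;> simp [offDiag]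
  ext ⟨i, j⟩ ⟨k, l⟩
  by_cases h : i = k <;> by_cases h' : j = l <;> simp [kron, hA, one_apply, h, h']

end PatternMatrix

/-- Determinant of the 9×9 matrix over a commutative ring R whose entry at position
((α,β),(γ,δ)) is p if α = γ and β = δ, q if exactly one of α = γ, β = δ holds, and
r otherwise: it equals (p + q − 2r)⁴·(p − 2q + r)⁴·(p + 4q + 4r). -/
theorem det_pattern_matrix (R : Type*) [CommRing R] (p q r : R) :
    (Matrix.of (fun (a b : Fin 3 × Fin 3) =>
        if a.1 = b.1 ∧ a.2 = b.2 then p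
        else if a.1 = b.1 ∨ a.2 = b.2 then q
        else r)).det
      = (p + q - 2 * r) ^ 4 * (p - 2 * q + r) ^ 4 * (p + 4 * q + 4 * r) := by
  rw [PatternMatrix.kron_offDiag, ← PatternMatrix.det_kron_tri]
  have h := congrArg Matrix.det
    (PatternMatrix.kron_mul p q r (PatternMatrix.offDiag_mul_basisChange (R := R)))
  simpa [det_mul, det_kronecker, PatternMatrix.det_basisChange] using h
end

section
/- Let R be a commutative ring and let P, Q be m×m matrices over R with P·Q = Q·P. Then the 3m×3m block matrix with block rows [P Q Q], [Q P Q], [Q Q P] has determinant equal to det(P³ − 3·P·Q² + 2·Q³). -/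
/-!
Write the block matrix as a `3 × 3` matrix over the ring of `m × m` matrices. Conjugating it by the
unipotent matrix `[[1,0,0],[0,1,0],[1,1,1]]` (subtract the last block column from the other two, then
add the first two block rows to the last) makes it block upper triangular with diagonal blocks
`P - Q`, `P - Q`, `P + 2Q`. The determinant is therefore `det ((P - Q)² (P + 2Q))`, and commutativity
of `P` and `Q` is needed only to expand this product.
-/

open Matrix

lemma det_comp_upper_three {R : Type*} [CommRing R] {m : ℕ}
    (A B C D E F : Matrix (Fin m) (Fin m) R) :
    (compRingEquiv (Fin 3) (Fin m) R !![A, B, C; 0, D, E; 0, 0, F]).det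
      = A.det * D.det * F.det := by
  have hT : BlockTriangular (compRingEquiv (Fin 3) (Fin m) R !![A, B, C; 0, D, E; 0, 0, F])
      Prod.fst := by
    rintro ⟨i, k⟩ ⟨j, l⟩ h
    change j < i at h
    fin_cases i <;> fin_cases j <;> first | rfl | exact absurd h (by decide)
  have hblock (k : Fin 3) :
      (toSquareBlock (compRingEquiv (Fin 3) (Fin m) R !![A, B, C; 0, D, E; 0, 0, F])
        Prod.fst k).det = ((!![A, B, C; 0, D, E; 0, 0, F] : Matrix _ _ (Matrix _ _ R)) k k).det := by
    let e : Fin m ≃ {a : Fin 3 × Fin m // a.1 = k} :=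
      { toFun := fun i => ⟨(k, i), rfl⟩
        invFun := fun a => a.1.2
        left_inv := fun _ => rfl
        right_inv := by rintro ⟨⟨_, _⟩, rfl⟩; rfl }
    rw [← det_submatrix_equiv_self e]
    rfl
  rw [hT.det_fintype, Fin.prod_univ_three, hblock, hblock, hblock]
  rfl

/-- If P and Q are commuting m×m matrices over a commutative ring, the 3m×3m block
matrix [[P,Q,Q],[Q,P,Q],[Q,Q,P]] has determinant det(P³ − 3·P·Q² + 2·Q³). -/
theorem det_block_circulant (R : Type*) [CommRing R] (m : ℕ)
    (P Q : Matrix (Fin m) (Fin m) R) (hPQ : P * Q = Q * P) :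
    (Matrix.of (fun (a b : Fin 3 × Fin m) =>
        if a.1 = b.1 then P a.2 b.2 else Q a.2 b.2)).det
      = (P ^ 3 - 3 • (P * Q ^ 2) + 2 • Q ^ 3).det := by
  let L : Matrix (Fin 3) (Fin 3) (Matrix (Fin m) (Fin m) R) := !![1, 0, 0; 0, 1, 0; 1, 1, 1]
  let V : Matrix (Fin 3) (Fin 3) (Matrix (Fin m) (Fin m) R) := !![1, 0, 0; 0, 1, 0; -1, -1, 1]
  let M : Matrix (Fin 3) (Fin 3) (Matrix (Fin m) (Fin m) R) := !![P, Q, Q; Q, P, Q; Q, Q, P]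
  let T : Matrix (Fin 3) (Fin 3) (Matrix (Fin m) (Fin m) R) :=
    !![P - Q, 0, Q; 0, P - Q, Q; 0, 0, P + (Q + Q)]
  let φ := compRingEquiv (Fin 3) (Fin m) R
  have hM : Matrix.of (fun (a b : Fin 3 × Fin m) =>
      if a.1 = b.1 then P a.2 b.2 else Q a.2 b.2) = φ M := by
    ext ⟨i, k⟩ ⟨j, l⟩
    fin_cases i <;> fin_cases j <;> rfl
  have hLV : L * V = 1 := by
    ext1 i j
    fin_cases i <;> fin_cases j <;> simp [L, V, Matrix.mul_apply, Fin.sum_univ_three]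
  have hT : L * M * V = T := by
    ext1 i j
    fin_cases i <;> fin_cases j <;>
      simp [L, M, V, T, Matrix.mul_apply, Fin.sum_univ_three] <;> try abel
  have hdet : (φ L).det * (φ V).det = 1 := by
    rw [← det_mul, ← map_mul, hLV, map_one, det_one]
  have hMT : (φ M).det = (φ T).det := by
    rw [← hT, map_mul, map_mul, det_mul, det_mul, mul_right_comm, hdet, one_mul]
  have hfac : P ^ 3 - 3 • (P * Q ^ 2) + 2 • Q ^ 3 = (P - Q) * (P - Q) * (P + (Q + Q)) := by
    have h1 : Q * P * P = P * P * Q := by rw [← hPQ, mul_assoc, ← hPQ, mul_assoc]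
    have h2 : P * Q * P = P * P * Q := by rw [mul_assoc, ← hPQ, mul_assoc]
    have h3 : Q * P * Q = P * Q * Q := by rw [hPQ]
    have h4 : Q * Q * P = P * Q * Q := by rw [mul_assoc, ← hPQ, ← mul_assoc, hPQ]
    simp only [pow_succ, pow_zero, one_mul, succ_nsmul, zero_nsmul, zero_add, mul_add,
      sub_mul, mul_sub, ← mul_assoc, h1, h2, h3, h4]
    abel
  rw [hM, hMT, hfac, det_mul, det_mul]
  exact det_comp_upper_three _ _ _ _ _ _
end

section
/- For every integer n ≥ 2, the matrix M_ZZ(n) over ℚ is invertible if and only if n ≠ 4; in particular det M_ZZ(n) ≠ 0 for all n ≥ 2 with n ≠ 4, and det M_ZZ(4) = 0. -/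
/-!
Since the two indices of a coupling are distinct, `M_ZZ(n) = J - 2A` with `J` the all-ones matrix
and `A` the adjacency matrix of the triangular graph `T(n)` (pairs meeting in one point). For a
vector `x`, let `T` be its total and `s i` the sum of `x` over the pairs containing `i`; then
`(M x)_{ij} = T - 2 (s i + s j) + 4 x_{ij}` (`MZZ_mulVec`). If `M x = 0`, summing over `j ≠ i` gives
`(n - 5) T = 2 (n - 4) s i`, and summing this over `i` gives `(n² - 9n + 16) T = 0`. The quadratic
has discriminant `17`, hence no integer root, so `T = 0`; for `n ≠ 4` then `s = 0`, and `x = 0`.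
For `n = 4` the vector `x_{ij} = u i + u j` with `u = (1, -1, 0, 0)` lies in the kernel.
-/

open Matrix

/-- The |Pₙ|×|Pₙ| matrix M_ZZ(n) with rows indexed by couplings (i,j) ∈ Pₙ and columns
by blocks (ℓ,m) ∈ Pₙ, with entry (−1)^{δ_{iℓ} + δ_{im} + δ_{jℓ} + δ_{jm}}. -/
def MZZ (n : ℕ) : Matrix (PairIdx n) (PairIdx n) ℚ :=
  fun r c =>
    (-1 : ℚ) ^ (((if r.1.1 = c.1.1 then 1 else 0) + (if r.1.1 = c.1.2 then 1 else 0) +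
      (if r.1.2 = c.1.1 then 1 else 0) + (if r.1.2 = c.1.2 then 1 else 0) : ℕ))

lemma sum_pairIdx {n : ℕ} (F : Fin n → Fin n → ℚ) :
    ∑ r : PairIdx n, F r.1.1 r.1.2 = ∑ i, ∑ j, if i < j then F i j else 0 := by
  rw [← Fintype.sum_prod_type' (f := fun i j => if i < j then F i j else 0),
    ← Finset.sum_filter]
  exact (Finset.sum_subtype (p := fun p : Fin n × Fin n => p.1 < p.2) _ (by simp)
    (fun p => F p.1 p.2)).symm

/-- The symmetric extension of a vector indexed by pairs, with zero diagonal. -/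
def symExt {n : ℕ} (x : PairIdx n → ℚ) (i j : Fin n) : ℚ :=
  if h : i < j then x ⟨(i, j), h⟩ else if h : j < i then x ⟨(j, i), h⟩ else 0

lemma symExt_comm {n : ℕ} (x : PairIdx n → ℚ) (i j : Fin n) : symExt x i j = symExt x j i := by
  unfold symExt
  split_ifs <;> first | rfl | omega

lemma symExt_self {n : ℕ} (x : PairIdx n → ℚ) (i : Fin n) : symExt x i i = 0 := by
  simp [symExt]

lemma symExt_pair {n : ℕ} (x : PairIdx n → ℚ) (r : PairIdx n) : symExt x r.1.1 r.1.2 = x r := by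
  simp [symExt, r.2]

/-- The indicator of the point `i` lying in the pair `c`. -/
def inc {n : ℕ} (i : Fin n) (c : PairIdx n) : ℚ :=
  (if i = c.1.1 then 1 else 0) + (if i = c.1.2 then 1 else 0)

lemma sum_inc_mul {n : ℕ} (x : PairIdx n → ℚ) (i : Fin n) :
    ∑ c, inc i c * x c = ∑ j, symExt x i j := by
  have h := sum_pairIdx (fun a b => ((if i = a then 1 else 0) + (if i = b then 1 else 0)) *
    symExt x a b)
  simp only [symExt_pair] at h
  refine h.trans ?_
  have h1 : ∀ a b : Fin n, (if a < b then ((if i = a then (1 : ℚ) else 0) +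
      (if i = b then 1 else 0)) * symExt x a b else 0) =
      (if i = a then (if a < b then symExt x a b else 0) else 0) +
      (if i = b then (if a < b then symExt x a b else 0) else 0) := by
    intro a b
    split_ifs <;> ring
  simp only [h1, Finset.sum_add_distrib]
  rw [Finset.sum_comm]
  simp only [Finset.sum_ite_eq, Finset.mem_univ, if_true, ← Finset.sum_add_distrib]
  refine Finset.sum_congr rfl fun j _ => ?_
  rcases lt_trichotomy i j with hij | rfl | hij
  · simp [hij, hij.not_gt]
  · simp [symExt_self]
  · simp [hij, hij.not_gt, symExt_comm x j i]

lemma MZZ_apply {n : ℕ} (r c : PairIdx n) :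
    MZZ n r c = 1 - 2 * inc r.1.1 c - 2 * inc r.1.2 c + 4 * (if r = c then 1 else 0) := by
  obtain ⟨⟨i, j⟩, hr⟩ := r
  obtain ⟨⟨k, l⟩, hc⟩ := c
  change i < j at hr
  change k < l at hc
  simp only [MZZ, inc, Subtype.mk.injEq, Prod.mk.injEq]
  split_ifs <;> first | omega | norm_num

lemma MZZ_mulVec {n : ℕ} (x : PairIdx n → ℚ) (r : PairIdx n) :
    (MZZ n *ᵥ x) r = ∑ c, x c - 2 * ∑ j, symExt x r.1.1 j - 2 * ∑ j, symExt x r.1.2 j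
      + 4 * x r := by
  simp only [← sum_inc_mul, Matrix.mulVec, dotProduct, MZZ_apply]
  have h : x r = ∑ c, (if r = c then 1 else 0) * x c := by simp
  rw [h]
  simp only [Finset.mul_sum, ← Finset.sum_add_distrib, ← Finset.sum_sub_distrib]
  exact Finset.sum_congr rfl fun c _ => by ring

lemma sum_inc {n : ℕ} (c : PairIdx n) : ∑ i, inc i c = 2 := by
  simp [inc, Finset.sum_add_distrib]
  norm_num

/-- Each pair is counted once at each of its two points. -/
lemma sum_symExt {n : ℕ} (x : PairIdx n → ℚ) : ∑ i, ∑ j, symExt x i j = 2 * ∑ c, x c := by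
  simp only [← sum_inc_mul]
  rw [Finset.sum_comm]
  simp only [← Finset.sum_mul, sum_inc, Finset.mul_sum]

lemma quadratic_ne_zero (n : ℕ) : (n : ℚ) ^ 2 - 9 * n + 16 ≠ 0 := by
  intro h
  have hz : (n : ℤ) ^ 2 - 9 * n + 16 = 0 := by exact_mod_cast h
  have hlt : n < 9 := by
    by_contra! hge
    have : (9 : ℤ) ≤ n := by exact_mod_cast hge
    nlinarith
  interval_cases n <;> norm_num at hz

lemma eq_zero_of_mulVec {n : ℕ} (h4 : n ≠ 4) (x : PairIdx n → ℚ) (hx : MZZ n *ᵥ x = 0) :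
    x = 0 := by
  set T := ∑ c, x c with hT
  set s : Fin n → ℚ := fun i => ∑ j, symExt x i j with hs
  have hr : ∀ r : PairIdx n, T - 2 * s r.1.1 - 2 * s r.1.2 + 4 * x r = 0 := fun r => by
    rw [← MZZ_mulVec, hx]; rfl
  have hsT : ∑ i, s i = 2 * T := sum_symExt x
  -- The correction term extends the kernel equation to the diagonal, so that it can be summed over
  -- all `j`.
  have hij : ∀ i j, T - 2 * s i - 2 * s j + 4 * symExt x i j
      = if i = j then T - 4 * s i else 0 := by
    intro i j
    rcases lt_trichotomy i j with h | rfl | h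
    · rw [if_neg h.ne, ← hr ⟨(i, j), h⟩, ← symExt_pair x ⟨(i, j), h⟩]
    · rw [if_pos rfl, symExt_self]; ring
    · rw [if_neg h.ne', ← hr ⟨(j, i), h⟩, ← symExt_pair x ⟨(j, i), h⟩, symExt_comm]
      ring
  have hi : ∀ i, (n - 5 : ℚ) * T = 2 * (n - 4) * s i := by
    intro i
    have h := Finset.sum_congr (rfl : (Finset.univ : Finset (Fin n)) = _) fun j _ => hij i j
    simp only [Finset.sum_add_distrib, Finset.sum_sub_distrib, ← Finset.mul_sum, hsT,
      Finset.sum_ite_eq, Finset.mem_univ, if_true, Finset.sum_const, Finset.card_univ,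
      Fintype.card_fin, nsmul_eq_mul] at h
    change _ + 4 * s i = _ at h
    linarith
  have hq : ((n : ℚ) ^ 2 - 9 * n + 16) * T = 0 := by
    have h := Finset.sum_congr (rfl : (Finset.univ : Finset (Fin n)) = _) fun i _ => hi i
    simp only [← Finset.mul_sum, hsT, Finset.sum_const, Finset.card_univ, Fintype.card_fin,
      nsmul_eq_mul] at h
    linarith
  have hT0 : T = 0 := (mul_eq_zero.mp hq).resolve_left (quadratic_ne_zero n)
  have hn4 : (2 * ((n : ℚ) - 4)) ≠ 0 :=
    mul_ne_zero two_ne_zero (sub_ne_zero.mpr (by exact_mod_cast h4))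
  have hs0 : ∀ i, s i = 0 := fun i => by
    have h := hi i
    rw [hT0, mul_zero] at h
    exact (mul_eq_zero.mp h.symm).resolve_left hn4
  funext r
  have h := hr r
  rw [hT0, hs0, hs0] at h
  simpa using h

lemma det_MZZ_four : (MZZ 4).det = 0 := by
  rw [← Matrix.exists_mulVec_eq_zero_iff]
  let u : Fin 4 → ℚ := ![1, -1, 0, 0]
  refine ⟨fun r => u r.1.1 + u r.1.2, ?_, ?_⟩
  · intro h
    have := congrFun h ⟨(0, 2), by decide⟩
    simp [u] at this
  · have hT : ∑ c : PairIdx 4, (u c.1.1 + u c.1.2) = 0 := by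
      rw [sum_pairIdx fun i j => u i + u j]
      simp [Fin.sum_univ_four, u]
    have hs : ∀ i, ∑ j, symExt (fun r : PairIdx 4 => u r.1.1 + u r.1.2) i j = 2 * u i := by
      intro i
      fin_cases i <;> simp [Fin.sum_univ_four, symExt, u] <;> norm_num
    funext r
    rw [MZZ_mulVec, hT, hs, hs, Pi.zero_apply]
    ring

/-- For n ≥ 2, M_ZZ(n) is invertible over ℚ iff n ≠ 4; in particular det M_ZZ(n) ≠ 0
for n ≠ 4, and det M_ZZ(4) = 0. -/
theorem MZZ_invertible_iff (n : ℕ) (hn : 2 ≤ n) :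
    (IsUnit (MZZ n) ↔ n ≠ 4) ∧ (n ≠ 4 → (MZZ n).det ≠ 0) ∧ (MZZ 4).det = 0 := by
  have key : n ≠ 4 → (MZZ n).det ≠ 0 := by
    intro h4 hdet
    obtain ⟨x, hx0, hx⟩ := Matrix.exists_mulVec_eq_zero_iff.mpr hdet
    exact hx0 (eq_zero_of_mulVec h4 x hx)
  refine ⟨?_, key, det_MZZ_four⟩
  rw [Matrix.isUnit_iff_isUnit_det, isUnit_iff_ne_zero]
  refine ⟨?_, key⟩
  rintro h rfl
  exact h det_MZZ_four
end
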